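/- Every triangle-edge tree is common. That is, if H admits a K₃-decomposition (F, T) with |X ∩ Y| = 2 for every edge XY of T, then for every ε > 0 there exists n₀ such that for all n ≥ n₀, every red/blue colouring of the edges of the complete graph K_n contains at least (2^{1−|E(H)|} − ε)·n^{|V(H)|} monochromatic homomorphic labelled copies of H (i.e., maps V(H) → V(K_n) sending every edge of H to a red edge, plus those sending every edge of H to a blue edge, counted together). -/

import Mathlib

open MeasureTheory

/-- The homomorphism density `t_H(G)`. -/
noncomputable def homDensity {α β : Type*} [Fintype α] [Fintype β]
    (H : SimpleGraph α) (G : SimpleGraph β) : ℝ :=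
  (Nat.card (H →g G) : ℝ) / (Fintype.card β : ℝ) ^ (Fintype.card α)

/-- The number of edges of a graph. -/
noncomputable def edgeCount {α : Type*} (H : SimpleGraph α) : ℕ :=
  Nat.card H.edgeSet

/-- `G` is `(ρ,d)`-dense: every vertex subset `X` with `|X| ≥ ρ|V(G)|`
spans at least `(d/2)|X|²` edges. -/
def LocallyDense {β : Type*} [Fintype β] (G : SimpleGraph β) (ρ d : ℝ) : Prop :=
  ∀ X : Finset β, ρ * (Fintype.card β : ℝ) ≤ (X.card : ℝ) →
    d / 2 * (X.card : ℝ) ^ 2 ≤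
      (Nat.card {e : Sym2 β // e ∈ G.edgeSet ∧ ∀ v ∈ e, v ∈ X} : ℝ)

/-- `(bag, T)` is a tree decomposition of `H`. -/
def IsTreeDecomp {α ι : Type*} [DecidableEq α] (H : SimpleGraph α) (bag : ι → Finset α)
    (T : SimpleGraph ι) : Prop :=
  T.IsTree ∧
  (∀ v : α, ∃ X, v ∈ bag X) ∧
  (∀ u v : α, H.Adj u v → ∃ X, u ∈ bag X ∧ v ∈ bag X) ∧
  (∀ X Y Z : ι, ∀ p : T.Walk X Y, p.IsPath → Z ∈ p.support →
    bag X ∩ bag Y ⊆ bag Z)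

/-- `(bag, T)` is a `J`-decomposition of `H`: a tree decomposition in which every
bag induces a copy of `J`, and for adjacent bags there is an isomorphism between the
induced copies of `J` fixing the intersection pointwise. -/
def IsJDecomp {α ι γ : Type*} [DecidableEq α] (H : SimpleGraph α) (J : SimpleGraph γ)
    (bag : ι → Finset α) (T : SimpleGraph ι) : Prop :=
  IsTreeDecomp H bag T ∧
  (∀ X : ι, Nonempty (H.induce ↑(bag X) ≃g J)) ∧
  (∀ X Y : ι, T.Adj X Y → ∃ e : H.induce ↑(bag X) ≃g H.induce ↑(bag Y),
      ∀ (v : α) (h1 : v ∈ bag X) (h2 : v ∈ bag Y),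
        ((e ⟨v, h1⟩ : ↑(bag Y)) : α) = v)

/-- `H` is `J`-decomposable. -/
def JDecomposable {α γ : Type*} [DecidableEq α] (H : SimpleGraph α) (J : SimpleGraph γ) : Prop :=
  ∃ (ι : Type) (_ : Fintype ι) (bag : ι → Finset α) (T : SimpleGraph ι),
    IsJDecomp H J bag T

/-!
A triangle-edge tree is a 2-tree: each bag, met in a connected order, adds one vertex `w` joined to
exactly the two ends of an existing edge `uv`. Given a graph `G` containing a triangle, build a
random homomorphism `H → G` along this order, starting from an edge of a uniformly random triangle
and sending each `w` to a uniformly random common neighbour of the images of `u` and `v`. Every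
edge of `H` then has the law of an edge of a random triangle, so the entropy of the homomorphism is
explicit, and comparing it with the logarithm of the number of homomorphisms gives
`t(K₃, G) ^ (k + 1) ≤ t(H, G) * t(K₂, G) ^ k`, where `H` has `k + 3` vertices and `2k + 3` edges.
Applied to the two colour classes and combined by Jensen's inequality for `x ^ (k + 1)`, with
weights the two edge densities, this yields `(t(K₃, R) + t(K₃, Rᶜ)) ^ (k + 1) ≤ t(H, R) + t(H, Rᶜ)`,
and Goodman's bound on monochromatic triangles makes the base at least `1 / 4 - o(1)`.
-/

open scoped BigOperators
open Finset Function Real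

theorem update_eq_of_dependsOn {α V β : Type*} [DecidableEq α] {S : Finset α} {F : (α → V) → β}
    (hF : DependsOn F (S : Set α)) {w : α} (hw : w ∉ S) (φ : α → V) (c : V) :
    F (update φ w c) = F φ :=
  hF fun _ hx ↦ update_of_ne (ne_of_mem_of_not_mem (mem_coe.1 hx) hw) c φ

section Expectation

variable {α V : Type*} [Fintype α] [DecidableEq α] [Fintype V] [Nonempty V]

theorem expect_expect_update (w : α) (F : (α → V) → ℝ) :
    𝔼 φ, 𝔼 c, F (update φ w c) = 𝔼 φ, F φ := by
  have swap_involutive :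
      Involutive fun q : (α → V) × V ↦ (update q.1 w q.2, q.1 w) := by
    rintro ⟨φ, c⟩
    simp
  calc 𝔼 φ, 𝔼 c, F (update φ w c)
      = 𝔼 q : (α → V) × V, F (update q.1 w q.2) :=
        (expect_product univ univ fun q : (α → V) × V ↦ F (update q.1 w q.2)).symm
    _ = 𝔼 q : (α → V) × V, F q.1 :=
        Fintype.expect_equiv swap_involutive.toPerm _ _ fun _ ↦ rfl
    _ = 𝔼 φ, 𝔼 _c : V, F φ := expect_product univ univ fun q : (α → V) × V ↦ F q.1
    _ = 𝔼 φ, F φ := by simp only [Fintype.expect_const]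

theorem expect_apply_apply {u v : α} (huv : u ≠ v) (g : V → V → ℝ) :
    𝔼 φ : α → V, g (φ u) (φ v) = 𝔼 a, 𝔼 b, g a b := by
  rw [← expect_expect_update u, ← expect_expect_update v]
  simp only [update_self, update_of_ne huv.symm, Fintype.expect_const]
  exact expect_comm _ _ _

theorem mul_log_expect_div_expect_le {ι : Type*} [Fintype ι] {p q : ι → ℝ}
    (hp : ∀ i, 0 ≤ p i) (hq : ∀ i, 0 ≤ q i) (hpq : ∀ i, q i = 0 → p i = 0) :
    (𝔼 i, p i) * log ((𝔼 i, p i) / 𝔼 i, q i) ≤ 𝔼 i, p i * log (p i / q i) := by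
  rcases (expect_nonneg fun i _ ↦ hp i).eq_or_lt with hp_zero | hp_pos
  · have p_eq_zero : p = 0 := (Fintype.expect_eq_zero_iff_of_nonneg hp).1 hp_zero.symm
    simp [p_eq_zero]
  have q_pos_of_p_pos {i : ι} (hi : 0 < p i) : 0 < q i :=
    (hq i).lt_of_ne fun h ↦ hi.ne' (hpq i h.symm)
  obtain ⟨i, -, hi⟩ := exists_ne_zero_of_expect_ne_zero hp_pos.ne'
  have hq_pos : 0 < 𝔼 i, q i :=
    expect_pos' (fun i _ ↦ hq i) ⟨i, mem_univ i, q_pos_of_p_pos ((hp i).lt_of_ne' hi)⟩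
  set r := (𝔼 i, p i) / 𝔼 i, q i
  have r_pos : 0 < r := div_pos hp_pos hq_pos
  have tangent (i : ι) : p i * log r + (p i - r * q i) ≤ p i * log (p i / q i) := by
    rcases (hp i).eq_or_lt with hi | hi
    · simpa [← hi] using mul_nonneg r_pos.le (hq i)
    have hqi := q_pos_of_p_pos hi
    have key := mul_le_mul_of_nonneg_left
      (log_le_sub_one_of_pos (show 0 < r / (p i / q i) by positivity)) hi.le
    rw [log_div r_pos.ne' (by positivity)] at key
    have expand : p i * (r / (p i / q i) - 1) = r * q i - p i := by field_simp
    linarith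
  have balance : r * 𝔼 i, q i = 𝔼 i, p i := div_mul_cancel₀ _ hq_pos.ne'
  have total := expect_le_expect fun i (_ : i ∈ univ) ↦ tangent i
  rw [expect_add_distrib, expect_sub_distrib, ← expect_mul, ← mul_expect, balance] at total
  linarith

end Expectation

section TriangleDensity

variable {V : Type*} (G : SimpleGraph V)

/-- The `0`-`1` indicator of adjacency in `G`. -/
noncomputable def edgeInd (a b : V) : ℝ :=
  open Classical in if G.Adj a b then 1 else 0

/-- The `0`-`1` indicator of ordered triangles of `G`. -/
noncomputable def triangleInd (a b c : V) : ℝ :=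
  edgeInd G a b * edgeInd G b c * edgeInd G a c

theorem edgeInd_comm (a b : V) : edgeInd G a b = edgeInd G b a :=
  open Classical in if_congr (G.adj_comm a b) rfl rfl

theorem edgeInd_eq_zero_or_one (a b : V) : edgeInd G a b = 0 ∨ edgeInd G a b = 1 := by
  unfold edgeInd
  split_ifs <;> simp

theorem edgeInd_nonneg (a b : V) : 0 ≤ edgeInd G a b := by
  rcases edgeInd_eq_zero_or_one G a b with h | h <;> simp [h]

theorem edgeInd_add_edgeInd_compl [DecidableEq V] (a b : V) :
    edgeInd G a b + edgeInd Gᶜ a b = 1 - if a = b then 1 else 0 := by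
  by_cases hab : a = b
  · simp [edgeInd, hab]
  · by_cases h : G.Adj a b <;> simp [edgeInd, hab, h]

theorem triangleInd_nonneg (a b c : V) : 0 ≤ triangleInd G a b c :=
  mul_nonneg (mul_nonneg (edgeInd_nonneg G a b) (edgeInd_nonneg G b c)) (edgeInd_nonneg G a c)

theorem triangleInd_swap_left (a b c : V) : triangleInd G a b c = triangleInd G b a c := by
  rw [triangleInd, triangleInd, edgeInd_comm G a b]
  ring

theorem triangleInd_swap_right (a b c : V) : triangleInd G a b c = triangleInd G a c b := by
  rw [triangleInd, triangleInd, edgeInd_comm G b c]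
  ring

theorem triangleInd_eq_one_of_ne_zero {a b c : V} (h : triangleInd G a b c ≠ 0) :
    triangleInd G a b c = 1 := by
  rcases edgeInd_eq_zero_or_one G a b with hab | hab <;>
  rcases edgeInd_eq_zero_or_one G b c with hbc | hbc <;>
  rcases edgeInd_eq_zero_or_one G a c with hac | hac <;>
  simp_all [triangleInd]

variable [Fintype V]

/-- The proportion of vertices forming a triangle with `a` and `b`; it is `0` unless `ab` is an
edge. -/
noncomputable def codegreeDensity (a b : V) : ℝ := 𝔼 c, triangleInd G a b c

/-- The homomorphism density of a single edge in `G`. -/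
noncomputable def edgeDensity : ℝ := 𝔼 a, 𝔼 b, edgeInd G a b

/-- The homomorphism density of the triangle in `G`. -/
noncomputable def triangleDensity : ℝ := 𝔼 a, 𝔼 b, codegreeDensity G a b

/-- The expectation of `g` at the first two vertices of a uniformly random ordered triangle
of `G`. -/
noncomputable def edgeMean (g : V → V → ℝ) : ℝ :=
  𝔼 a, 𝔼 b, codegreeDensity G a b / triangleDensity G * g a b

theorem codegreeDensity_comm (a b : V) : codegreeDensity G a b = codegreeDensity G b a :=
  expect_congr rfl fun c _ ↦ triangleInd_swap_left G a b c

theorem codegreeDensity_nonneg (a b : V) : 0 ≤ codegreeDensity G a b :=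
  expect_nonneg fun c _ ↦ triangleInd_nonneg G a b c

theorem edgeDensity_nonneg : 0 ≤ edgeDensity G :=
  expect_nonneg fun a _ ↦ expect_nonneg fun b _ ↦ edgeInd_nonneg G a b

theorem triangleDensity_nonneg : 0 ≤ triangleDensity G :=
  expect_nonneg fun a _ ↦ expect_nonneg fun b _ ↦ codegreeDensity_nonneg G a b

variable {G}

theorem edgeInd_eq_one_of_codegreeDensity_ne_zero {a b : V} (h : codegreeDensity G a b ≠ 0) :
    edgeInd G a b = 1 := by
  refine (edgeInd_eq_zero_or_one G a b).resolve_left fun hab ↦ h ?_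
  simp [codegreeDensity, triangleInd, hab]

theorem adj_of_codegreeDensity_ne_zero {a b : V} (h : codegreeDensity G a b ≠ 0) : G.Adj a b := by
  by_contra hab
  simpa [edgeInd, hab] using edgeInd_eq_one_of_codegreeDensity_ne_zero h

theorem codegreeDensity_pos_of_triangleInd_ne_zero {a b c : V} (h : triangleInd G a b c ≠ 0) :
    0 < codegreeDensity G a b :=
  expect_pos' (fun c _ ↦ triangleInd_nonneg G a b c)
    ⟨c, mem_univ c, (triangleInd_nonneg G a b c).lt_of_ne' h⟩

variable (G)

theorem edgeMean_swap (g : V → V → ℝ) : edgeMean G (fun a b ↦ g b a) = edgeMean G g := by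
  unfold edgeMean
  rw [expect_comm]
  simp only [codegreeDensity_comm G]

theorem edgeMean_const_one (h : triangleDensity G ≠ 0) : edgeMean G (fun _ _ ↦ 1) = 1 := by
  simp only [edgeMean, mul_one, ← expect_div]
  exact div_self h

theorem expect_triangleInd_third_first (g : V → V → ℝ) :
    𝔼 a, 𝔼 b, 𝔼 c, triangleInd G a b c / triangleDensity G * g c a = edgeMean G g := by
  rw [← edgeMean_swap]
  refine expect_congr rfl fun a _ ↦ ?_
  rw [expect_comm]
  simp only [triangleInd_swap_right G a, ← expect_mul, ← expect_div, codegreeDensity]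

theorem expect_triangleInd_third_second (g : V → V → ℝ) :
    𝔼 a, 𝔼 b, 𝔼 c, triangleInd G a b c / triangleDensity G * g c b = edgeMean G g := by
  rw [← expect_triangleInd_third_first, expect_comm]
  simp only [triangleInd_swap_left G]

variable [Nonempty V]

theorem edgeDensity_add_edgeDensity_compl_le_one : edgeDensity G + edgeDensity Gᶜ ≤ 1 := by
  classical
  simp only [edgeDensity, ← expect_add_distrib]
  refine expect_le univ_nonempty fun a _ ↦ expect_le univ_nonempty fun b _ ↦ ?_
  rw [edgeInd_add_edgeInd_compl]
  split_ifs <;> norm_num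

end TriangleDensity

section TwoTree

variable {α : Type*} [DecidableEq α] {H : SimpleGraph α} {S : Finset α}

/-- The induced subgraph `H[S]` is a 2-tree: it arises from a single edge by repeatedly adding a
vertex `w` joined to exactly the two ends of an existing edge `uv`. -/
inductive IsTwoTreeOn (H : SimpleGraph α) : Finset α → Prop
  | edge {u v : α} (huv : H.Adj u v) : IsTwoTreeOn H {u, v}
  | attach {S : Finset α} {u v w : α} (hS : IsTwoTreeOn H S) (hu : u ∈ S) (hv : v ∈ S)
      (huv : H.Adj u v) (hw : w ∉ S) (hN : ∀ x ∈ S, H.Adj w x ↔ x = u ∨ x = v) :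
      IsTwoTreeOn H (insert w S)

theorem IsTwoTreeOn.exists_adj (hS : IsTwoTreeOn H S) : ∃ u ∈ S, ∃ v ∈ S, H.Adj u v := by
  induction hS with
  | @edge u v huv => exact ⟨u, by simp, v, by simp, huv⟩
  | attach _ hu hv huv _ _ _ => exact ⟨_, mem_insert_of_mem hu, _, mem_insert_of_mem hv, huv⟩

open Classical in
theorem IsTwoTreeOn.card_edges (hS : IsTwoTreeOn H S) :
    #{e ∈ S.sym2 | e ∈ H.edgeSet} + 3 = 2 * #S := by
  induction hS with
  | @edge u v huv =>
    have edges_eq : {e ∈ ({u, v} : Finset α).sym2 | e ∈ H.edgeSet} = {s(u, v)} := by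
      ext e
      induction e with | _ x y =>
      simp only [mem_filter, mk_mem_sym2_iff, mem_insert, mem_singleton, SimpleGraph.mem_edgeSet,
        Sym2.eq_iff]
      grind [SimpleGraph.irrefl, SimpleGraph.adj_comm]
    rw [edges_eq, card_singleton, card_pair huv.ne]
  | @attach S u v w _ hu hv huv hw hN ih =>
    have edges_eq : {e ∈ (insert w S).sym2 | e ∈ H.edgeSet} =
        insert s(w, u) (insert s(w, v) {e ∈ S.sym2 | e ∈ H.edgeSet}) := by
      ext e
      induction e with | _ x y =>
      simp only [mem_filter, mk_mem_sym2_iff, mem_insert, SimpleGraph.mem_edgeSet, Sym2.eq_iff]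
      grind [SimpleGraph.irrefl, SimpleGraph.adj_comm]
    rw [edges_eq, card_insert_of_notMem, card_insert_of_notMem, card_insert_of_notMem hw]
    · omega
    · simp [hw]
    · simp [hw, huv.ne, ne_of_mem_of_not_mem hu hw]

end TwoTree

section ChainDensity

variable {α V : Type*} [Fintype α] [DecidableEq α] [Fintype V]

/-- `P` is a density, with respect to the uniform distribution on maps `α → V`, whose restriction
to `S` is a random homomorphism `H[S] → G` sending every edge to an edge of a uniformly random
triangle of `G`, with the entropy of a chain of triangles glued along edges: beyond the first
triangle, each vertex contributes the mean of `log (codegreeDensity G)`. -/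
structure IsTriangleChainDensity (H : SimpleGraph α) (G : SimpleGraph V) (S : Finset α)
    (P : (α → V) → ℝ) : Prop where
  nonneg (φ : α → V) : 0 ≤ P φ
  dependsOn : DependsOn P (S : Set α)
  edge_law {x y : α} (hx : x ∈ S) (hy : y ∈ S) (hxy : H.Adj x y) (g : V → V → ℝ) :
    𝔼 φ, P φ * g (φ x) (φ y) = edgeMean G g
  entropy : 𝔼 φ, P φ * log (P φ) = -log (triangleDensity G) -
    ((#S : ℝ) - 3) * edgeMean G fun a b ↦ log (codegreeDensity G a b)

/-- The density of the extension of a map drawn from `P` by sending `w` to a uniformly random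
common neighbour of the images of `u` and `v`. -/
noncomputable def appendTriangle (G : SimpleGraph V) (P : (α → V) → ℝ) (u v w : α)
    (φ : α → V) : ℝ :=
  P φ * (triangleInd G (φ u) (φ v) (φ w) / codegreeDensity G (φ u) (φ v))

variable {H : SimpleGraph α} {G : SimpleGraph V} {S : Finset α} {P : (α → V) → ℝ}

theorem IsTriangleChainDensity.codegreeDensity_ne_zero (hP : IsTriangleChainDensity H G S P)
    {x y : α} (hx : x ∈ S) (hy : y ∈ S) (hxy : H.Adj x y) {φ : α → V} (hφ : P φ ≠ 0) :
    codegreeDensity G (φ x) (φ y) ≠ 0 := by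
  classical
  intro hzero
  let g (a b : V) : ℝ := if codegreeDensity G a b = 0 then 1 else 0
  have mean_g : edgeMean G g = 0 :=
    expect_eq_zero fun a _ ↦ expect_eq_zero fun b _ ↦ by simp +contextual [g]
  have terms_nonneg (ψ : α → V) : 0 ≤ P ψ * g (ψ x) (ψ y) :=
    mul_nonneg (hP.nonneg ψ) (by simp only [g]; split_ifs <;> norm_num)
  have terms_zero := (Fintype.expect_eq_zero_iff_of_nonneg terms_nonneg).1
    ((hP.edge_law hx hy hxy g).trans mean_g)
  exact hφ (by simpa [g, hzero] using congrFun terms_zero φ)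

theorem isTriangleChainDensity_edge [Nonempty V] {u v : α} (huv : H.Adj u v)
    (hG : 0 < triangleDensity G) :
    IsTriangleChainDensity H G {u, v}
      fun φ ↦ codegreeDensity G (φ u) (φ v) / triangleDensity G where
  nonneg φ := div_nonneg (codegreeDensity_nonneg G _ _) hG.le
  dependsOn φ ψ h := by simp [h u (by simp), h v (by simp)]
  edge_law {x y} hx hy hxy g := by
    have law (f : V → V → ℝ) : 𝔼 φ : α → V,
        codegreeDensity G (φ u) (φ v) / triangleDensity G * f (φ u) (φ v) = edgeMean G f :=
      expect_apply_apply huv.ne fun a b ↦ codegreeDensity G a b / triangleDensity G * f a b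
    simp only [mem_insert, mem_singleton] at hx hy
    rcases hx with rfl | rfl <;> rcases hy with rfl | rfl
    · exact absurd hxy H.irrefl
    · exact law g
    · rw [law fun a b ↦ g b a, edgeMean_swap]
    · exact absurd hxy H.irrefl
  entropy := by
    have pointwise (a b : V) :
        codegreeDensity G a b / triangleDensity G *
            log (codegreeDensity G a b / triangleDensity G) =
          codegreeDensity G a b / triangleDensity G * log (codegreeDensity G a b) -
            log (triangleDensity G) * (codegreeDensity G a b / triangleDensity G * 1) := by
      rcases eq_or_ne (codegreeDensity G a b) 0 with h | h
      · simp [h]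
      · rw [log_div h hG.ne']
        ring
    have total : 𝔼 a, 𝔼 b, codegreeDensity G a b / triangleDensity G * 1 = 1 :=
      edgeMean_const_one G hG.ne'
    rw [expect_apply_apply huv.ne fun a b ↦ codegreeDensity G a b / triangleDensity G *
      log (codegreeDensity G a b / triangleDensity G)]
    simp only [pointwise, expect_sub_distrib, ← mul_expect, total, card_pair huv.ne, edgeMean]
    push_cast
    ring

namespace IsTriangleChainDensity

variable [Nonempty V] (hP : IsTriangleChainDensity H G S P) {u v w : α}
  (hu : u ∈ S) (hv : v ∈ S) (huv : H.Adj u v) (hw : w ∉ S)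

include hP hu hv hw in
theorem expect_appendTriangle_mul (F : (α → V) → ℝ) :
    𝔼 φ, appendTriangle G P u v w φ * F φ =
      𝔼 φ, P φ * 𝔼 c, triangleInd G (φ u) (φ v) c / codegreeDensity G (φ u) (φ v) *
        F (update φ w c) := by
  rw [← expect_expect_update w]
  simp only [appendTriangle, update_eq_of_dependsOn hP.dependsOn hw, update_self,
    update_of_ne (ne_of_mem_of_not_mem hu hw), update_of_ne (ne_of_mem_of_not_mem hv hw),
    mul_assoc, mul_expect]

include hP hu hv huv hw in
theorem expect_appendTriangle_mul_of_dependsOn {F : (α → V) → ℝ}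
    (hF : DependsOn F (S : Set α)) :
    𝔼 φ, appendTriangle G P u v w φ * F φ = 𝔼 φ, P φ * F φ := by
  rw [hP.expect_appendTriangle_mul hu hv hw]
  refine expect_congr rfl fun φ _ ↦ ?_
  rcases eq_or_ne (P φ) 0 with hφ | hφ
  · simp [hφ]
  · simp only [update_eq_of_dependsOn hF hw, ← expect_mul, ← expect_div]
    rw [← codegreeDensity, div_self (hP.codegreeDensity_ne_zero hu hv huv hφ), one_mul]

include hP hu hv huv hw in
theorem triangle_law (g : V → V → V → ℝ) :
    𝔼 φ, appendTriangle G P u v w φ * g (φ u) (φ v) (φ w) =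
      𝔼 a, 𝔼 b, 𝔼 c, triangleInd G a b c / triangleDensity G * g a b c := by
  rw [hP.expect_appendTriangle_mul hu hv hw]
  simp only [update_self, update_of_ne (ne_of_mem_of_not_mem hu hw),
    update_of_ne (ne_of_mem_of_not_mem hv hw)]
  rw [hP.edge_law hu hv huv
    fun a b ↦ 𝔼 c, triangleInd G a b c / codegreeDensity G a b * g a b c]
  refine expect_congr rfl fun a _ ↦ expect_congr rfl fun b _ ↦ ?_
  rw [mul_expect]
  refine expect_congr rfl fun c _ ↦ ?_
  rcases eq_or_ne (triangleInd G a b c) 0 with h | h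
  · simp [h]
  · have := codegreeDensity_pos_of_triangleInd_ne_zero h
    field_simp

include hP hu hv huv hw in
theorem appendTriangle_edge_law (hN : ∀ x ∈ S, H.Adj w x ↔ x = u ∨ x = v) {x y : α}
    (hx : x ∈ insert w S) (hy : y ∈ insert w S) (hxy : H.Adj x y) (g : V → V → ℝ) :
    𝔼 φ, appendTriangle G P u v w φ * g (φ x) (φ y) = edgeMean G g := by
  have law_at_w {z : α} (hz : z ∈ S) (hwz : H.Adj w z) (f : V → V → ℝ) :
      𝔼 φ, appendTriangle G P u v w φ * f (φ w) (φ z) = edgeMean G f := by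
    rcases (hN z hz).1 hwz with rfl | rfl
    · rw [hP.triangle_law hu hv huv hw fun a _ c ↦ f c a, expect_triangleInd_third_first]
    · rw [hP.triangle_law hu hv huv hw fun _ b c ↦ f c b, expect_triangleInd_third_second]
  rcases mem_insert.1 hx with rfl | hxS <;> rcases mem_insert.1 hy with rfl | hyS
  · exact absurd hxy H.irrefl
  · exact law_at_w hyS hxy g
  · rw [law_at_w hxS hxy.symm fun a b ↦ g b a, edgeMean_swap]
  · have depends : DependsOn (fun φ : α → V ↦ g (φ x) (φ y)) (S : Set α) :=
      fun φ ψ h ↦ by simp only [h x hxS, h y hyS]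
    rw [hP.expect_appendTriangle_mul_of_dependsOn hu hv huv hw depends,
      hP.edge_law hxS hyS hxy]

include hP hu hv huv hw in
theorem appendTriangle_entropy :
    𝔼 φ, appendTriangle G P u v w φ * log (appendTriangle G P u v w φ) =
      (𝔼 φ, P φ * log (P φ)) - edgeMean G fun a b ↦ log (codegreeDensity G a b) := by
  have log_append (φ : α → V) :
      appendTriangle G P u v w φ * log (appendTriangle G P u v w φ) =
        appendTriangle G P u v w φ * (log (P φ) - log (codegreeDensity G (φ u) (φ v))) := by
    rcases eq_or_ne (appendTriangle G P u v w φ) 0 with h | h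
    · simp [h]
    have hPφ : P φ ≠ 0 := left_ne_zero_of_mul h
    have htri : triangleInd G (φ u) (φ v) (φ w) ≠ 0 :=
      (div_ne_zero_iff.1 (right_ne_zero_of_mul h)).1
    have hcodeg := (codegreeDensity_pos_of_triangleInd_ne_zero htri).ne'
    congr 1
    rw [appendTriangle, triangleInd_eq_one_of_ne_zero G htri, one_div,
      log_mul hPφ (inv_ne_zero hcodeg), log_inv, sub_eq_add_neg]
  have depends : DependsOn
      (fun φ ↦ log (P φ) - log (codegreeDensity G (φ u) (φ v))) (S : Set α) :=
    fun φ ψ h ↦ by simp only [hP.dependsOn h, h u hu, h v hv]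
  simp only [log_append]
  rw [hP.expect_appendTriangle_mul_of_dependsOn hu hv huv hw depends]
  simp only [mul_sub, expect_sub_distrib]
  rw [hP.edge_law hu hv huv fun a b ↦ log (codegreeDensity G a b)]

end IsTriangleChainDensity

theorem isTriangleChainDensity_appendTriangle [Nonempty V] (hP : IsTriangleChainDensity H G S P)
    {u v w : α} (hu : u ∈ S) (hv : v ∈ S) (huv : H.Adj u v) (hw : w ∉ S)
    (hN : ∀ x ∈ S, H.Adj w x ↔ x = u ∨ x = v) :
    IsTriangleChainDensity H G (insert w S) (appendTriangle G P u v w) where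
  nonneg φ := mul_nonneg (hP.nonneg φ)
    (div_nonneg (triangleInd_nonneg G _ _ _) (codegreeDensity_nonneg G _ _))
  dependsOn φ ψ h := by
    have hS : ∀ x ∈ S, φ x = ψ x := fun x hx ↦ h x (mem_insert_of_mem hx)
    simp only [appendTriangle, hP.dependsOn hS, hS u hu, hS v hv,
      h w (mem_insert_self w S)]
  edge_law := hP.appendTriangle_edge_law hu hv huv hw hN
  entropy := by
    rw [hP.appendTriangle_entropy hu hv huv hw, hP.entropy, card_insert_of_notMem hw]
    push_cast
    ring

theorem IsTwoTreeOn.exists_isTriangleChainDensity [Nonempty V] (hS : IsTwoTreeOn H S)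
    (hG : 0 < triangleDensity G) : ∃ P, IsTriangleChainDensity H G S P := by
  induction hS with
  | edge huv => exact ⟨_, isTriangleChainDensity_edge huv hG⟩
  | attach _ hu hv huv hw hN ih =>
    obtain ⟨P, hP⟩ := ih
    exact ⟨_, isTriangleChainDensity_appendTriangle hP hu hv huv hw hN⟩

end ChainDensity

section DensityBounds

variable {V : Type*} [Fintype V] {G : SimpleGraph V}

theorem edgeDensity_pos (hG : 0 < triangleDensity G) : 0 < edgeDensity G := by
  obtain ⟨a, -, ha⟩ := exists_ne_zero_of_expect_ne_zero hG.ne'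
  obtain ⟨b, -, hab⟩ := exists_ne_zero_of_expect_ne_zero ha
  refine expect_pos' (fun a _ ↦ expect_nonneg fun b _ ↦ edgeInd_nonneg G a b) ⟨a, mem_univ a, ?_⟩
  refine expect_pos' (fun b _ ↦ edgeInd_nonneg G a b) ⟨b, mem_univ b, ?_⟩
  simp [edgeInd_eq_one_of_codegreeDensity_ne_zero hab]

theorem log_div_le_edgeMean_log_codegreeDensity (hG : 0 < triangleDensity G) :
    log (triangleDensity G / edgeDensity G) ≤
      edgeMean G fun a b ↦ log (codegreeDensity G a b) := by
  have pair_expect (f : V → V → ℝ) : 𝔼 a, 𝔼 b, f a b = 𝔼 e : V × V, f e.1 e.2 :=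
    (expect_product' univ univ f).symm
  have log_sum := mul_log_expect_div_expect_le
    (p := fun e : V × V ↦ codegreeDensity G e.1 e.2) (q := fun e ↦ edgeInd G e.1 e.2)
    (fun _ ↦ codegreeDensity_nonneg G _ _) (fun _ ↦ edgeInd_nonneg G _ _)
    (fun e he ↦ by simp [codegreeDensity, triangleInd, he])
  rw [← pair_expect, ← pair_expect, ← triangleDensity, ← edgeDensity, ← le_div_iff₀' hG,
    expect_div, ← pair_expect fun a b ↦
      codegreeDensity G a b * log (codegreeDensity G a b / edgeInd G a b) / triangleDensity G]
    at log_sum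
  refine log_sum.trans_eq (expect_congr rfl fun a _ ↦ expect_congr rfl fun b _ ↦ ?_)
  rcases eq_or_ne (codegreeDensity G a b) 0 with h | h
  · simp [h]
  · rw [edgeInd_eq_one_of_codegreeDensity_ne_zero h, div_one]
    ring

variable {α : Type*} [Fintype α]

theorem homDensity_nonneg (H : SimpleGraph α) (G : SimpleGraph V) : 0 ≤ homDensity H G := by
  unfold homDensity
  positivity

variable [DecidableEq α]

open Classical in
theorem homDensity_eq_expect (H : SimpleGraph α) (G : SimpleGraph V) :
    homDensity H G = 𝔼 φ : α → V, if ∀ x y, H.Adj x y → G.Adj (φ x) (φ y) then 1 else 0 := by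
  let homs : (H →g G) ≃ {φ : α → V // ∀ x y, H.Adj x y → G.Adj (φ x) (φ y)} :=
    { toFun f := ⟨f, fun _ _ h ↦ f.map_adj h⟩
      invFun φ := ⟨φ.1, fun h ↦ φ.2 _ _ h⟩ }
  rw [homDensity, Nat.card_congr homs, Nat.card_eq_fintype_card, Fintype.card_subtype,
    Fintype.expect_eq_sum_div_card, sum_boole, Fintype.card_fun, Nat.cast_pow]

variable {H : SimpleGraph α}

theorem IsTriangleChainDensity.neg_entropy_le_log_homDensity {P : (α → V) → ℝ}
    (hP : IsTriangleChainDensity H G univ P) (hP_one : 𝔼 φ, P φ = 1) :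
    0 < homDensity H G ∧ -𝔼 φ, P φ * log (P φ) ≤ log (homDensity H G) := by
  classical
  let q (φ : α → V) : ℝ := if ∀ x y, H.Adj x y → G.Adj (φ x) (φ y) then 1 else 0
  have q_eq_one {φ : α → V} (hφ : P φ ≠ 0) : q φ = 1 := if_pos fun x y hxy ↦
    adj_of_codegreeDensity_ne_zero (hP.codegreeDensity_ne_zero (mem_univ x) (mem_univ y) hxy hφ)
  have q_nonneg (φ : α → V) : 0 ≤ q φ := by
    simp only [q]
    split_ifs <;> norm_num
  have expect_q : 𝔼 φ, q φ = homDensity H G := (homDensity_eq_expect H G).symm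
  obtain ⟨φ, -, hφ⟩ := exists_ne_zero_of_expect_ne_zero (hP_one.trans_ne one_ne_zero)
  constructor
  · rw [← expect_q]
    exact expect_pos' (fun φ _ ↦ q_nonneg φ) ⟨φ, mem_univ φ, by simp [q_eq_one hφ]⟩
  have log_sum := mul_log_expect_div_expect_le hP.nonneg q_nonneg
    fun φ hφ ↦ by_contra fun hPφ ↦ by simp [q_eq_one hPφ] at hφ
  rw [hP_one, expect_q, one_mul, one_div, log_inv] at log_sum
  have drop_q : 𝔼 φ, P φ * log (P φ / q φ) = 𝔼 φ, P φ * log (P φ) := by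
    refine expect_congr rfl fun φ _ ↦ ?_
    rcases eq_or_ne (P φ) 0 with h | h
    · simp [h]
    · rw [q_eq_one h, div_one]
  linarith

theorem triangleDensity_pow_le_homDensity_mul_edgeDensity_pow [Nonempty V]
    (hH : IsTwoTreeOn H univ) {k : ℕ} (hk : Fintype.card α = k + 3) :
    triangleDensity G ^ (k + 1) ≤ homDensity H G * edgeDensity G ^ k := by
  rcases (triangleDensity_nonneg G).eq_or_lt with hG | hG
  · rw [← hG, zero_pow k.succ_ne_zero]
    exact mul_nonneg (homDensity_nonneg H G) (pow_nonneg (edgeDensity_nonneg G) k)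
  have hE := edgeDensity_pos hG
  obtain ⟨P, hP⟩ := hH.exists_isTriangleChainDensity hG
  have hP_one : 𝔼 φ, P φ = 1 := by
    obtain ⟨u, hu, v, hv, huv⟩ := hH.exists_adj
    simpa [edgeMean_const_one G hG.ne'] using hP.edge_law hu hv huv fun _ _ ↦ 1
  obtain ⟨hom_pos, hom_ge⟩ := hP.neg_entropy_le_log_homDensity hP_one
  have mean_ge := mul_le_mul_of_nonneg_left (log_div_le_edgeMean_log_codegreeDensity hG)
    (Nat.cast_nonneg (α := ℝ) k)
  rw [hP.entropy, card_univ, hk] at hom_ge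
  rw [log_div hG.ne' hE.ne'] at mean_ge
  rw [← log_le_log_iff (by positivity) (by positivity), log_mul hom_pos.ne' (by positivity),
    log_pow, log_pow]
  push_cast at hom_ge ⊢
  linarith

end DensityBounds

section Colouring

theorem mul_div_pow_succ_le {a x p : ℝ} (hx : 0 ≤ x) (hp : 0 ≤ p) {k : ℕ}
    (h : a ^ (k + 1) ≤ p * x ^ k) : x * (a / x) ^ (k + 1) ≤ p := by
  rcases hx.eq_or_lt with rfl | hx
  · simpa using hp
  · calc x * (a / x) ^ (k + 1) = a ^ (k + 1) / x ^ k := by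
          rw [div_pow, pow_succ' x]
          field_simp
      _ ≤ p := (div_le_iff₀ (pow_pos hx k)).2 h

theorem add_pow_succ_le_of_pow_succ_le {a b x y p q : ℝ} (ha : 0 ≤ a) (hb : 0 ≤ b) (hx : 0 ≤ x)
    (hy : 0 ≤ y) (hxy : x + y ≤ 1) (hp : 0 ≤ p) (hq : 0 ≤ q) {k : ℕ}
    (hap : a ^ (k + 1) ≤ p * x ^ k) (hbq : b ^ (k + 1) ≤ q * y ^ k) :
    (a + b) ^ (k + 1) ≤ p + q := by
  rcases k with _ | k
  · simpa using add_le_add hap hbq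
  have xa : x * (a / x) = a := mul_div_cancel_of_imp' fun h ↦ by
    simpa [h] using hap.antisymm (by rw [h]; simp [pow_nonneg ha])
  have yb : y * (b / y) = b := mul_div_cancel_of_imp' fun h ↦ by
    simpa [h] using hbq.antisymm (by rw [h]; simp [pow_nonneg hb])
  have jensen : (a + b) ^ (k + 2) ≤ x * (a / x) ^ (k + 2) + y * (b / y) ^ (k + 2) := by
    have weights_nonneg : ∀ i ∈ univ, 0 ≤ ![x, y, 1 - x - y] i := by
      simp [Fin.forall_fin_succ, hx, hy, sub_sub, hxy]
    simpa [Fin.sum_univ_three, xa, yb] using (convexOn_pow (k + 2)).map_sum_le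
      (p := ![a / x, b / y, 0]) weights_nonneg (by simp [Fin.sum_univ_three])
      (by simp [Fin.forall_fin_succ, div_nonneg, *])
  linarith [mul_div_pow_succ_le hx hp hap, mul_div_pow_succ_le hy hq hbq]

variable {V : Type*} (R : SimpleGraph V)

-- For distinct vertices this is `xyz + (1 - x)(1 - y)(1 - z) = 1 - (x + y + z) + (xy + yz + xz)`;
-- the subtracted indicators absorb the coincidences.
theorem one_sub_le_triangleInd_add_triangleInd_compl [DecidableEq V] (a b c : V) :
    1 - (edgeInd R a b + edgeInd R b c + edgeInd R a c) +
        (edgeInd R a b * edgeInd R a c + edgeInd R b a * edgeInd R b c +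
          edgeInd R c a * edgeInd R c b) -
        ((if a = b then 1 else 0) + (if b = c then 1 else 0) + if a = c then 1 else 0) ≤
      triangleInd R a b c + triangleInd Rᶜ a b c := by
  rw [edgeInd_comm R b a, edgeInd_comm R c a, edgeInd_comm R c b]
  by_cases distinct : a ≠ b ∧ b ≠ c ∧ a ≠ c
  · obtain ⟨hab, hbc, hac⟩ := distinct
    have compl_eq {x y : V} (hxy : x ≠ y) : edgeInd Rᶜ x y = 1 - edgeInd R x y := by
      simpa [hxy, eq_sub_iff_add_eq'] using edgeInd_add_edgeInd_compl R x y
    rw [triangleInd, triangleInd, compl_eq hab, compl_eq hbc, compl_eq hac, if_neg hab,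
      if_neg hbc, if_neg hac]
    linarith
  · have coincidence : (1 : ℝ) ≤
        (if a = b then 1 else 0) + (if b = c then 1 else 0) + if a = c then 1 else 0 := by
      grind
    have le_one : 1 - (edgeInd R a b + edgeInd R b c + edgeInd R a c) +
        (edgeInd R a b * edgeInd R a c + edgeInd R a b * edgeInd R b c +
          edgeInd R a c * edgeInd R b c) ≤ 1 := by
      rcases edgeInd_eq_zero_or_one R a b with hab | hab <;>
      rcases edgeInd_eq_zero_or_one R b c with hbc | hbc <;>
      rcases edgeInd_eq_zero_or_one R a c with hac | hac <;>
      norm_num [hab, hbc, hac]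
    linarith [triangleInd_nonneg R a b c, triangleInd_nonneg Rᶜ a b c]

variable [Fintype V] [Nonempty V]

theorem IsTwoTreeOn.pow_le_homDensity_add_homDensity_compl {α : Type*} [Fintype α] [DecidableEq α]
    {H : SimpleGraph α} (hH : IsTwoTreeOn H univ) {k : ℕ} (hk : Fintype.card α = k + 3) :
    (triangleDensity R + triangleDensity Rᶜ) ^ (k + 1) ≤ homDensity H R + homDensity H Rᶜ :=
  add_pow_succ_le_of_pow_succ_le (triangleDensity_nonneg R) (triangleDensity_nonneg Rᶜ)
    (edgeDensity_nonneg R) (edgeDensity_nonneg Rᶜ) (edgeDensity_add_edgeDensity_compl_le_one R)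
    (homDensity_nonneg H R) (homDensity_nonneg H Rᶜ)
    (triangleDensity_pow_le_homDensity_mul_edgeDensity_pow hH hk)
    (triangleDensity_pow_le_homDensity_mul_edgeDensity_pow hH hk)

theorem edgeDensity_sq_le_expect_sq : edgeDensity R ^ 2 ≤ 𝔼 a, (𝔼 b, edgeInd R a b) ^ 2 := by
  have := expect_mul_sq_le_sq_mul_sq univ (fun a ↦ 𝔼 b, edgeInd R a b) fun _ ↦ 1
  simpa [edgeDensity] using this

theorem one_fourth_sub_le_triangleDensity_add_triangleDensity_compl :
    1 / 4 - 3 / (Fintype.card V : ℝ) ≤ triangleDensity R + triangleDensity Rᶜ := by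
  classical
  have averaged := expect_le_expect fun a (_ : a ∈ univ) ↦ expect_le_expect fun b (_ : b ∈ univ) ↦
    expect_le_expect fun c (_ : c ∈ univ) ↦ one_sub_le_triangleInd_add_triangleInd_compl R a b c
  have cherries₁ : 𝔼 a, 𝔼 b, 𝔼 c, edgeInd R a b * edgeInd R a c = 𝔼 a, (𝔼 b, edgeInd R a b) ^ 2 :=
    expect_congr rfl fun a _ ↦ by rw [sq, expect_mul_expect]
  have cherries₂ : 𝔼 a, 𝔼 b, 𝔼 c, edgeInd R b a * edgeInd R b c =
      𝔼 a, (𝔼 b, edgeInd R a b) ^ 2 := by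
    rw [expect_comm, cherries₁]
  have cherries₃ : 𝔼 a, 𝔼 b, 𝔼 c, edgeInd R c a * edgeInd R c b =
      𝔼 a, (𝔼 b, edgeInd R a b) ^ 2 := by
    rw [← cherries₂]
    exact expect_congr rfl fun a _ ↦ expect_comm _ _ _
  have diagonal (a : V) : 𝔼 b, (if a = b then (1 : ℝ) else 0) = 1 / Fintype.card V := by
    simp
  have edges : 𝔼 a, 𝔼 b, edgeInd R a b = edgeDensity R := rfl
  have triangles (G : SimpleGraph V) :
      𝔼 a, 𝔼 b, 𝔼 c, triangleInd G a b c = triangleDensity G := rfl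
  simp only [expect_sub_distrib, expect_add_distrib, cherries₁, cherries₂, cherries₃, diagonal,
    Fintype.expect_const, edges, triangles] at averaged
  have cauchy_schwarz := edgeDensity_sq_le_expect_sq R
  have : 3 / (Fintype.card V : ℝ) = 3 * (1 / Fintype.card V) := div_eq_mul_one_div _ _
  linarith [sq_nonneg (edgeDensity R - 1 / 2)]

theorem IsTwoTreeOn.one_fourth_sub_pow_le_homDensity_add_homDensity_compl {α : Type*} [Fintype α]
    [DecidableEq α] {H : SimpleGraph α} (hH : IsTwoTreeOn H univ) {k : ℕ}
    (hk : Fintype.card α = k + 3) (hV : 12 ≤ Fintype.card V) :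
    (1 / 4 - 3 / (Fintype.card V : ℝ)) ^ (k + 1) ≤ homDensity H R + homDensity H Rᶜ := by
  have base_nonneg : (0 : ℝ) ≤ 1 / 4 - 3 / Fintype.card V := by
    rw [sub_nonneg, div_le_div_iff₀ (by positivity) (by norm_num)]
    exact_mod_cast (by omega : 3 * 4 ≤ 1 * Fintype.card V)
  exact (pow_le_pow_left₀ base_nonneg
    (one_fourth_sub_le_triangleDensity_add_triangleDensity_compl R) _).trans
    (hH.pow_le_homDensity_add_homDensity_compl R hk)

end Colouring

section TreeDecomposition

variable {ι : Type*} {T : SimpleGraph ι}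

theorem connected_finset_induction [Fintype ι] [DecidableEq ι] (hT : T.Connected)
    {p : Finset ι → Prop} (singleton : ∀ X, p {X})
    (insert : ∀ (C : Finset ι) X Y, (T.induce (C : Set ι)).Connected → Y ∈ C → X ∉ C →
      T.Adj X Y → p C → p (insert X C)) : p univ := by
  obtain ⟨X₀⟩ := hT.nonempty
  obtain ⟨C, ⟨hC, pC⟩, maximal⟩ :=
    (Set.toFinite {C : Finset ι | (T.induce (C : Set ι)).Connected ∧ p C}).exists_maximal
      ⟨{X₀}, by simpa using SimpleGraph.Connected.of_subsingleton, singleton X₀⟩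
  suffices hCuniv : C = univ from hCuniv ▸ pC
  by_contra hne
  obtain ⟨Z, hZ⟩ : ∃ Z, Z ∉ C := by simpa [eq_univ_iff_forall] using hne
  obtain ⟨⟨Y₀, hY₀⟩⟩ := hC.nonempty
  obtain ⟨⟨⟨Y, X⟩, hYX⟩, -, hY, hX⟩ :=
    (hT Y₀ Z).some.exists_boundary_dart (C : Set ι) hY₀ (mem_coe.not.2 hZ)
  have insert_connected : (T.induce (Insert.insert X C : Finset ι)).Connected := by
    rw [coe_insert, Set.insert_eq]
    exact SimpleGraph.connected_induce_union SimpleGraph.Preconnected.of_subsingleton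
      hC.preconnected rfl hY hYX.symm
  exact hX (maximal ⟨insert_connected, insert C X Y hC hY hX hYX.symm pC⟩
    (subset_insert X C) (mem_insert_self X C))

theorem isNClique_of_induce_iso_top {α γ : Type*} [Fintype γ] {H : SimpleGraph α}
    {s : Finset α}
    (f : H.induce (s : Set α) ≃g (⊤ : SimpleGraph γ)) : H.IsNClique (Fintype.card γ) s := by
  refine ⟨fun x hx y hy hxy ↦ ?_, by simpa using Fintype.card_congr f.toEquiv⟩
  exact f.map_adj_iff.1 (f.injective.ne (show (⟨x, hx⟩ : (s : Set α)) ≠ ⟨y, hy⟩ by simpa))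

theorem exists_walk_notMem_support {C : Set ι} (hC : (T.induce C).Preconnected) {X Y Z : ι}
    (hX : X ∉ C) (hY : Y ∈ C) (hZ : Z ∈ C) : ∃ p : T.Walk Y Z, X ∉ p.support := by
  obtain ⟨p⟩ := hC ⟨Y, hY⟩ ⟨Z, hZ⟩
  have hp : X ∉ (p.map (SimpleGraph.Embedding.induce C).toHom).support := by
    rw [SimpleGraph.Walk.support_map, List.mem_map]
    rintro ⟨W, -, rfl⟩
    exact hX W.2
  exact ⟨_, hp⟩

variable {α : Type*} [DecidableEq α] {H : SimpleGraph α} {bag : ι → Finset α}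

theorem IsTreeDecomp.inter_subset_of_walk (h : IsTreeDecomp H bag T) {X Y Z : ι}
    (hXY : T.Adj X Y) (p : T.Walk Y Z) (hX : X ∉ p.support) : bag X ∩ bag Z ⊆ bag Y := by
  classical
  refine h.2.2.2 X Z Y (.cons hXY p.bypass) ?_ (by simp)
  exact (SimpleGraph.Walk.cons_isPath_iff _ _).2
    ⟨p.bypass_isPath, fun hX' ↦ hX (p.support_bypass_subset_support hX')⟩

theorem IsTreeDecomp.mem_bag_of_adj (h : IsTreeDecomp H bag T) {C : Set ι}
    (hC : (T.induce C).Preconnected) {X Y Z : ι} (hX : X ∉ C) (hY : Y ∈ C) (hZ : Z ∈ C)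
    (hXY : T.Adj X Y) {w x : α} (hwX : w ∈ bag X) (hwY : w ∉ bag Y) (hxZ : x ∈ bag Z)
    (hwx : H.Adj w x) : x ∈ bag X := by
  obtain ⟨W, hwW, hxW⟩ := h.2.2.1 w x hwx
  obtain ⟨q, hq⟩ := (h.1.connected Z W).exists_isPath
  by_cases hXq : X ∈ q.support
  · exact h.2.2.2 Z W X q hq hXq (mem_inter.2 ⟨hxZ, hxW⟩)
  · obtain ⟨p, hp⟩ := exists_walk_notMem_support hC hX hY hZ
    have avoids : X ∉ (p.append q).support := by
      simp [SimpleGraph.Walk.mem_support_append_iff, hp, hXq]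
    exact absurd (h.inter_subset_of_walk hXY _ avoids (mem_inter.2 ⟨hwX, hwW⟩)) hwY

theorem isTwoTreeOn_of_isNClique_three {s : Finset α} (hs : H.IsNClique 3 s) :
    IsTwoTreeOn H s := by
  obtain ⟨w, u, v, hwu, hwv, huv, rfl⟩ := SimpleGraph.is3Clique_iff.1 hs
  exact (IsTwoTreeOn.edge huv).attach (by simp) (by simp) huv (by simp [hwu.ne, hwv.ne])
    (by simp [hwu, hwv])

theorem IsTreeDecomp.isTwoTreeOn_biUnion_insert [DecidableEq ι] (h : IsTreeDecomp H bag T)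
    {C : Finset ι} (hC : (T.induce (C : Set ι)).Preconnected) {X Y : ι} (hX : X ∉ C) (hY : Y ∈ C)
    (hXY : T.Adj X Y) (hbag : H.IsNClique 3 (bag X)) (hinter : #(bag X ∩ bag Y) = 2)
    (hS : IsTwoTreeOn H (C.biUnion bag)) : IsTwoTreeOn H ((insert X C).biUnion bag) := by
  obtain ⟨u, v, huv, inter_eq⟩ := card_eq_two.1 hinter
  obtain ⟨w, sdiff_eq⟩ : ∃ w, bag X \ bag Y = {w} := by
    have := card_sdiff_add_card_inter (bag X) (bag Y)
    have := hbag.card_eq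
    exact card_eq_one.1 (by omega)
  have bagX_eq : bag X = {w, u, v} := by
    rw [← sdiff_union_inter (bag X) (bag Y), sdiff_eq, inter_eq, singleton_union]
  obtain ⟨hwX, hwY⟩ := mem_sdiff.1 (sdiff_eq ▸ mem_singleton_self w)
  obtain ⟨huX, huY⟩ := mem_inter.1 (inter_eq ▸ mem_insert_self u {v})
  obtain ⟨hvX, hvY⟩ : v ∈ bag X ∧ v ∈ bag Y := mem_inter.1 (by simp [inter_eq])
  have huS : u ∈ C.biUnion bag := mem_biUnion.2 ⟨Y, hY, huY⟩
  have hvS : v ∈ C.biUnion bag := mem_biUnion.2 ⟨Y, hY, hvY⟩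
  have hwS : w ∉ C.biUnion bag := fun hwS ↦ by
    obtain ⟨Z, hZ, hwZ⟩ := mem_biUnion.1 hwS
    obtain ⟨p, hp⟩ := exists_walk_notMem_support hC hX hY hZ
    exact hwY (h.inter_subset_of_walk hXY p hp (mem_inter.2 ⟨hwX, hwZ⟩))
  have union_eq : (insert X C).biUnion bag = insert w (C.biUnion bag) := by
    rw [biUnion_insert, bagX_eq, insert_union, insert_union, singleton_union,
      insert_eq_of_mem hvS, insert_eq_of_mem huS]
  rw [union_eq]
  refine hS.attach huS hvS (hbag.isClique huX hvX huv) hwS fun x hx ↦ ⟨fun hwx ↦ ?_, ?_⟩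
  · obtain ⟨Z, hZ, hxZ⟩ := mem_biUnion.1 hx
    have hxX := h.mem_bag_of_adj hC hX hY hZ hXY hwX hwY hxZ hwx
    simpa [bagX_eq, hwx.ne'] using hxX
  · rintro (rfl | rfl)
    · exact hbag.isClique hwX huX (ne_of_mem_of_not_mem huY hwY).symm
    · exact hbag.isClique hwX hvX (ne_of_mem_of_not_mem hvY hwY).symm

theorem IsTreeDecomp.isTwoTreeOn_univ [Fintype α] [Finite ι] (h : IsTreeDecomp H bag T)
    (hbag : ∀ X, H.IsNClique 3 (bag X)) (hinter : ∀ X Y, T.Adj X Y → #(bag X ∩ bag Y) = 2) :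
    IsTwoTreeOn H univ := by
  classical
  cases nonempty_fintype ι
  have cover : univ.biUnion bag = univ := by
    simpa [eq_univ_iff_forall] using h.2.1
  rw [← cover]
  refine connected_finset_induction (p := fun C ↦ IsTwoTreeOn H (C.biUnion bag)) h.1.connected
    (fun X ↦ ?_) fun C X Y hC hY hX hXY ↦ ?_
  · rw [singleton_biUnion]
    exact isTwoTreeOn_of_isNClique_three (hbag X)
  · exact h.isTwoTreeOn_biUnion_insert hC.preconnected hX hY hXY (hbag X) (hinter X Y hXY)

end TreeDecomposition

section Counting

variable {α : Type*} [Fintype α]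

theorem IsTwoTreeOn.edgeCount_add_three [DecidableEq α] {H : SimpleGraph α}
    (hH : IsTwoTreeOn H univ) : edgeCount H + 3 = 2 * Fintype.card α := by
  classical
  rw [← card_univ, ← hH.card_edges, edgeCount]
  simp [Nat.card_eq_fintype_card, Fintype.card_subtype]

theorem two_zpow_one_sub_edgeCount [DecidableEq α] {H : SimpleGraph α}
    (hH : IsTwoTreeOn H univ) {k : ℕ} (hk : Fintype.card α = k + 3) :
    (2 : ℝ) ^ (1 - (edgeCount H : ℤ)) = (1 / 4) ^ (k + 1) := by
  have exponent : 1 - (edgeCount H : ℤ) = -(2 * (k + 1) : ℕ) := by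
    have := hH.edgeCount_add_three
    omega
  rw [exponent, zpow_neg, zpow_natCast, pow_mul, ← inv_pow]
  norm_num

theorem exists_forall_sub_le_one_fourth_sub_pow (k : ℕ) {ε : ℝ} (hε : 0 < ε) :
    ∃ n₀ : ℕ, ∀ n : ℕ, n₀ ≤ n → (1 / 4 : ℝ) ^ k - ε ≤ (1 / 4 - 3 / (n : ℝ)) ^ k := by
  have limit : Filter.Tendsto (fun n : ℕ ↦ (1 / 4 - 3 / (n : ℝ)) ^ k) .atTop
      (nhds ((1 / 4 - 0) ^ k)) :=
    (tendsto_const_nhds.sub (tendsto_const_div_atTop_nhds_zero_nat 3)).pow k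
  rw [sub_zero] at limit
  exact Filter.eventually_atTop.1 (limit.eventually (Filter.Eventually.mono
    (lt_mem_nhds (sub_lt_self _ hε)) fun _ ↦ le_of_lt))

theorem homDensity_mul_card_pow {β : Type*} [Fintype β] [Nonempty β] (H : SimpleGraph α)
    (G : SimpleGraph β) :
    homDensity H G * (Fintype.card β : ℝ) ^ Fintype.card α = Nat.card (H →g G) :=
  div_mul_cancel₀ _ (pow_ne_zero _ (Nat.cast_ne_zero.2 Fintype.card_ne_zero))

end Counting

theorem stmt19 {α : Type*} [Fintype α] [DecidableEq α] (H : SimpleGraph α)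
    (ι : Type) [Fintype ι] (bag : ι → Finset α) (T : SimpleGraph ι)
    (hdec : IsJDecomp H (⊤ : SimpleGraph (Fin 3)) bag T)
    (hint : ∀ X Y : ι, T.Adj X Y → (bag X ∩ bag Y).card = 2)
    (ε : ℝ) (hε : 0 < ε) :
    ∃ n₀ : ℕ, ∀ n : ℕ, n₀ ≤ n →
      -- a red/blue colouring of the edges of Kₙ is given by the graph R of red edges;
      -- the blue edges form its complement Rᶜ
      ∀ R : SimpleGraph (Fin n),
        ((Nat.card (H →g R) + Nat.card (H →g Rᶜ) : ℕ) : ℝ) ≥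
          ((2 : ℝ) ^ (1 - (edgeCount H : ℤ)) - ε) * (n : ℝ) ^ (Fintype.card α) := by
  obtain ⟨hT, hiso, -⟩ := hdec
  have triangles (X : ι) : H.IsNClique 3 (bag X) := isNClique_of_induce_iso_top (hiso X).some
  have two_tree : IsTwoTreeOn H univ := hT.isTwoTreeOn_univ triangles hint
  obtain ⟨X⟩ := hT.1.connected.nonempty
  obtain ⟨k, hk⟩ : ∃ k, Fintype.card α = k + 3 :=
    Nat.exists_eq_add_of_le' ((triangles X).card_eq.symm.trans_le (card_le_univ _))
  obtain ⟨n₀, hn₀⟩ := exists_forall_sub_le_one_fourth_sub_pow (k + 1) hε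
  refine ⟨max n₀ 12, fun n hn R ↦ ?_⟩
  obtain ⟨hn₀n, h12n⟩ := max_le_iff.1 hn
  have : NeZero n := ⟨by omega⟩
  have density_bound :
      (2 : ℝ) ^ (1 - (edgeCount H : ℤ)) - ε ≤ homDensity H R + homDensity H Rᶜ := by
    rw [two_zpow_one_sub_edgeCount two_tree hk]
    exact (hn₀ n hn₀n).trans (by
      simpa using two_tree.one_fourth_sub_pow_le_homDensity_add_homDensity_compl R hk (by simpa))
  have count_bound := mul_le_mul_of_nonneg_right density_bound
    (pow_nonneg (Nat.cast_nonneg (Fintype.card (Fin n))) (Fintype.card α))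
  rw [add_mul, homDensity_mul_card_pow, homDensity_mul_card_pow, Fintype.card_fin] at count_bound
  exact_mod_cast count_bound
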